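/- The set {F_{ih} : 1 ≤ i ≤ d, 0 ≤ h ≤ i−1} has exactly d(d+1)/2 − b nonzero elements, where b = |{i ∈ {1,…,d} : n_i = 2}| (indeed F_{ih} = 0 if and only if h = i−1 and n_i = 2). Moreover, every nonzero F_{ih} is an idempotent (F_{ih}² = F_{ih}) that commutes with every element of the Terwilliger algebra T(x₀) and spans a one-dimensional two-sided ideal of T(x₀): for every T ∈ T(x₀), T·F_{ih} is a complex scalar multiple of F_{ih}. -/

import Mathlib

open Finset Matrix

/-- Vertex set of the wreath product `K_{n 0} ≀ K_{n 1} ≀ ⋯ ≀ K_{n (d-1)}`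
(paper indices `n_1, …, n_d` correspond to `n 0, …, n (d-1)`). -/
abbrev Vx (d : ℕ) (n : ℕ → ℕ) : Type := (i : Fin d) → Fin (n i)

/-- `delta x y = 0` if `x = y`; otherwise `delta x y` is the largest (1-based)
index at which `x` and `y` differ. -/
def delta {d : ℕ} {n : ℕ → ℕ} (x y : Vx d n) : ℕ :=
  (Finset.univ.filter fun i => x i ≠ y i).sup fun i => (i : ℕ) + 1

/-- The `i`-th adjacency matrix of the wreath product: `(A i) x y = 1` iff `delta x y = i`. -/
noncomputable def A (d : ℕ) (n : ℕ → ℕ) (i : ℕ) : Matrix (Vx d n) (Vx d n) ℂ :=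
  Matrix.of fun x y => if delta x y = i then 1 else 0

/-- The valencies: `k 0 = 1` and, for `1 ≤ i`, `k i = n_1 ⋯ n_{i-1} (n_i - 1)`,
i.e. `k i = n 0 ⋯ n (i-2) * (n (i-1) - 1)`. -/
def k (n : ℕ → ℕ) (i : ℕ) : ℕ :=
  if i = 0 then 1 else (∏ j ∈ Finset.range (i - 1), n j) * (n (i - 1) - 1)

/-- The dual idempotent `E_i*` with respect to the base point `x₀`: the diagonal
0-1 matrix with `(E_i*)_{yy} = 1` iff `delta x₀ y = i`. -/
noncomputable def Es {d : ℕ} {n : ℕ → ℕ} (x₀ : Vx d n) (i : ℕ) :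
    Matrix (Vx d n) (Vx d n) ℂ :=
  Matrix.of fun y z => if y = z ∧ delta x₀ y = i then 1 else 0

/-- The all-ones matrix `J`. -/
noncomputable def Jm (d : ℕ) (n : ℕ → ℕ) : Matrix (Vx d n) (Vx d n) ℂ :=
  Matrix.of fun _ _ => 1

/-- The matrices `G i j`. -/
noncomputable def G {d : ℕ} {n : ℕ → ℕ} (x₀ : Vx d n) (i j : ℕ) :
    Matrix (Vx d n) (Vx d n) ℂ :=
  if i < j then ((k n j : ℂ))⁻¹ • (Es x₀ i * A d n j * Es x₀ j)
  else if j < i then ((k n j : ℂ))⁻¹ • (Es x₀ i * A d n i * Es x₀ j)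
  else ((k n i : ℂ))⁻¹ • (Es x₀ i * Jm d n * Es x₀ i)

/-- The span `U` of the matrices `G i j`, `i, j ∈ [d]`. -/
noncomputable def Uspan {d : ℕ} {n : ℕ → ℕ} (x₀ : Vx d n) :
    Submodule ℂ (Matrix (Vx d n) (Vx d n) ℂ) :=
  Submodule.span ℂ (Set.range fun p : Fin (d + 1) × Fin (d + 1) => G x₀ p.1 p.2)

/-- The Terwilliger algebra of the wreath product with respect to `x₀`. -/
noncomputable def Ter {d : ℕ} {n : ℕ → ℕ} (x₀ : Vx d n) :
    Subalgebra ℂ (Matrix (Vx d n) (Vx d n) ℂ) :=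
  Algebra.adjoin ℂ
    ((Set.range fun i : Fin (d + 1) => A d n i) ∪ (Set.range fun i : Fin (d + 1) => Es x₀ i))

/-- The matrices `F i h`, for `1 ≤ i ≤ d` and `0 ≤ h ≤ i - 1`. -/
noncomputable def F {d : ℕ} {n : ℕ → ℕ} (x₀ : Vx d n) (i h : ℕ) :
    Matrix (Vx d n) (Vx d n) ℂ :=
  if h < i - 1 then
    (∑ j ∈ Finset.range (h + 1), (k n j : ℂ))⁻¹ •
        (∑ j ∈ Finset.range (h + 1), Es x₀ i * A d n j * Es x₀ i)
      - (∑ j ∈ Finset.range (h + 2), (k n j : ℂ))⁻¹ •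
          (∑ j ∈ Finset.range (h + 2), Es x₀ i * A d n j * Es x₀ i)
  else
    (∑ j ∈ Finset.range i, (k n j : ℂ))⁻¹ •
        (∑ j ∈ Finset.range i, Es x₀ i * A d n j * Es x₀ i)
      - G x₀ i i

/-!
For a symmetric and transitive relation `r` on a finite set, the matrix averaging over the classes
of `r` is a symmetric idempotent, and these idempotents multiply in a transparent way when one
relation refines another. Since `delta` is an ultrametric, "`x` and `y` lie in the sphere of
radius `i` about `x₀` and `delta x y ≤ m`" is such a relation, and `F i h` is the difference of its
averaging matrices for `m = h` and `m = h + 1`. Hence `F i h` is idempotent, and it vanishes iff no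
two points of the sphere are at distance `h + 1`. The partial sums `A 0 + ⋯ + A m` are multiples of
averaging matrices too: they average over balls of radius `m`, which fixes `F i h` if `m ≤ h` and
kills it if `m > h`. So every generator of the Terwilliger algebra acts on `F i h` by a scalar.
-/

section AveragingMatrix

variable {X K : Type*} {r s t : X → X → Prop}

theorem rel_eq_of_rel [Std.Symm r] [IsTrans X r] {x y : X} (h : r x y) : r x = r y :=
  funext fun _ => propext ⟨trans_of r (symm_of r h), trans_of r h⟩

variable [Fintype X] [Field K] [DecidableRel r] [DecidableRel s] [DecidableRel t]

variable (K r) in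
/-- The matrix averaging over the classes of a partial equivalence relation `r`. Only symmetry and
transitivity of `r` are intended, so that the matrix vanishes outside the domain `{x | r x x}`. -/
noncomputable def avgMatrix : Matrix X X K :=
  of fun x y => if r x y then (#{z | r x z} : K)⁻¹ else 0

theorem avgMatrix_apply_eq_of_rel_eq {x y : X} (h : r x = r y) (z : X) :
    avgMatrix K r x z = avgMatrix K r y z := by
  simp only [avgMatrix, of_apply, h]

theorem avgMatrix_apply_of_not_rel {x y : X} (h : ¬ r x y) : avgMatrix K r x y = 0 :=
  if_neg h

theorem avgMatrix_eq_inv_smul {c : ℕ} (hcard : ∀ x y, r x y → #{z | r x z} = c) :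
    avgMatrix K r = (c : K)⁻¹ • of fun x y => if r x y then 1 else 0 := by
  ext x y
  by_cases hxy : r x y
  · simp [avgMatrix, hxy, hcard x y hxy]
  · simp [avgMatrix, hxy]

theorem avgMatrix_apply_ne_zero_iff [CharZero K] {x y : X} : avgMatrix K r x y ≠ 0 ↔ r x y := by
  simp only [avgMatrix, of_apply, ne_eq, ite_eq_right_iff, inv_eq_zero, Nat.cast_eq_zero,
    Finset.card_eq_zero, filter_eq_empty_iff]
  grind

theorem avgMatrix_eq_iff [CharZero K] :
    avgMatrix K r = avgMatrix K s ↔ ∀ x y, r x y ↔ s x y := by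
  refine ⟨fun h x y => ?_, fun h => ?_⟩
  · rw [← avgMatrix_apply_ne_zero_iff (K := K) (r := r), h, avgMatrix_apply_ne_zero_iff]
  · simp only [avgMatrix, h]

theorem isSymm_avgMatrix [Std.Symm r] [IsTrans X r] : (avgMatrix K r).IsSymm := by
  refine IsSymm.ext fun x y => ?_
  by_cases h : r x y
  · simp only [avgMatrix, of_apply, h, symm_of r h, if_true, rel_eq_of_rel h]
  · rw [avgMatrix_apply_of_not_rel h, avgMatrix_apply_of_not_rel fun h' => h (symm_of r h')]

theorem sum_avgMatrix_apply [CharZero K] [Std.Symm r] [IsTrans X r] (x : X) :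
    ∑ y, avgMatrix K r x y = if r x x then 1 else 0 := by
  split_ifs with hx
  · have hcard : (#{z | r x z} : K) ≠ 0 :=
      Nat.cast_ne_zero.2 (Finset.card_ne_zero_of_mem (mem_filter.2 ⟨mem_univ x, hx⟩))
    simp only [avgMatrix, of_apply, ← Finset.sum_filter, Finset.sum_const, nsmul_eq_mul]
    exact mul_inv_cancel₀ hcard
  · exact Finset.sum_eq_zero fun y _ =>
      avgMatrix_apply_of_not_rel fun hxy => hx (trans_of r hxy (symm_of r hxy))

variable [CharZero K] [Std.Symm r] [IsTrans X r]

theorem avgMatrix_mul_avgMatrix [DecidableEq X] (hrs : ∀ x y, r x y → s x = s y) :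
    avgMatrix K r * avgMatrix K s =
      diagonal (fun x => if r x x then 1 else 0) * avgMatrix K s := by
  ext x z
  have hrow (y : X) :
      avgMatrix K r x y * avgMatrix K s y z = avgMatrix K r x y * avgMatrix K s x z := by
    by_cases hxy : r x y
    · rw [avgMatrix_apply_eq_of_rel_eq (hrs x y hxy)]
    · simp only [avgMatrix_apply_of_not_rel hxy, zero_mul]
  rw [mul_apply, diagonal_mul, Finset.sum_congr rfl fun y _ => hrow y, ← Finset.sum_mul,
    sum_avgMatrix_apply]

variable [Std.Symm s] [IsTrans X s]

theorem avgMatrix_mul_avgMatrix_eq_right (hrs : ∀ x y, r x y → s x = s y)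
    (hdom : ∀ x, s x x → r x x) : avgMatrix K r * avgMatrix K s = avgMatrix K s := by
  classical
  rw [avgMatrix_mul_avgMatrix hrs]
  ext x z
  rw [diagonal_mul]
  by_cases hxz : s x z
  · rw [if_pos (hdom x (trans_of s hxz (symm_of s hxz))), one_mul]
  · rw [avgMatrix_apply_of_not_rel hxz, mul_zero]

theorem avgMatrix_mul_avgMatrix_of_le [DecidableEq X] (hrs : ∀ x y, r x y → s x y) :
    avgMatrix K s * avgMatrix K r =
      avgMatrix K s * diagonal (fun x => if r x x then 1 else 0) := by
  have h := congrArg Matrix.transpose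
    (avgMatrix_mul_avgMatrix (K := K) fun x y hxy => rel_eq_of_rel (hrs x y hxy))
  rwa [transpose_mul, transpose_mul, diagonal_transpose, isSymm_avgMatrix.eq,
    isSymm_avgMatrix.eq] at h

theorem isIdempotentElem_avgMatrix : IsIdempotentElem (avgMatrix K r) :=
  avgMatrix_mul_avgMatrix_eq_right (fun _ _ => rel_eq_of_rel) fun _ => id

theorem isIdempotentElem_avgMatrix_sub (hrs : ∀ x y, r x y → s x y)
    (hdom : ∀ x, s x x → r x x) : IsIdempotentElem (avgMatrix K r - avgMatrix K s) := by
  have hmul : avgMatrix K r * avgMatrix K s = avgMatrix K s :=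
    avgMatrix_mul_avgMatrix_eq_right (fun x y hxy => rel_eq_of_rel (hrs x y hxy)) hdom
  have hmul' : avgMatrix K s * avgMatrix K r = avgMatrix K s := by
    simpa only [transpose_mul, isSymm_avgMatrix.eq] using congrArg Matrix.transpose hmul
  exact isIdempotentElem_avgMatrix.sub isIdempotentElem_avgMatrix hmul' hmul

theorem avgMatrix_mul_sub_avgMatrix_eq_zero [Std.Symm t] [IsTrans X t]
    (hrt : ∀ x y, r x y → t x y) (hst : ∀ x y, s x y → t x y) (hdom : ∀ x, r x x ↔ s x x) :
    avgMatrix K t * (avgMatrix K r - avgMatrix K s) = 0 := by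
  classical
  rw [mul_sub, avgMatrix_mul_avgMatrix_of_le hrt, avgMatrix_mul_avgMatrix_of_le hst]
  simp only [hdom, sub_self]

end AveragingMatrix

section ScalarAction

theorem exists_mul_eq_smul_of_mem_adjoin {R B : Type*} [CommSemiring R] [Semiring B] [Algebra R B]
    {S : Set B} {e t : B} (hS : ∀ g ∈ S, ∃ c : R, g * e = c • e) (ht : t ∈ Algebra.adjoin R S) :
    ∃ c : R, t * e = c • e := by
  induction ht using Algebra.adjoin_induction with
  | mem g hg => exact hS g hg
  | algebraMap c => exact ⟨c, (Algebra.smul_def c e).symm⟩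
  | add a b _ _ ha hb =>
    obtain ⟨c, hc⟩ := ha
    obtain ⟨c', hc'⟩ := hb
    exact ⟨c + c', by rw [add_mul, hc, hc', add_smul]⟩
  | mul a b _ _ ha hb =>
    obtain ⟨c, hc⟩ := ha
    obtain ⟨c', hc'⟩ := hb
    exact ⟨c' * c, by rw [mul_assoc, hc', mul_smul_comm, hc, smul_smul]⟩

theorem commute_of_mul_eq_smul_of_isSymm {X R : Type*} [Fintype X] [CommSemiring R]
    {M N : Matrix X X R} {c : R} (hM : M.IsSymm) (hN : N.IsSymm) (h : M * N = c • N) :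
    Commute M N := by
  have h' : N * M = c • N := by
    simpa only [transpose_mul, transpose_smul, hM.eq, hN.eq] using congrArg Matrix.transpose h
  exact h.trans h'.symm

end ScalarAction

section Ultrametric

variable {d : ℕ} {n : ℕ → ℕ} {x₀ x y z : Vx d n} {i m : ℕ}

theorem delta_le_iff : delta x y ≤ m ↔ ∀ j : Fin d, m ≤ j → x j = y j := by
  simp only [delta, Finset.sup_le_iff, mem_filter, mem_univ, true_and, Nat.succ_le_iff]
  exact forall_congr' fun j => by rw [← not_lt, not_imp_comm]

theorem delta_eq_zero_iff : delta x y = 0 ↔ x = y := by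
  rw [← Nat.le_zero, delta_le_iff, funext_iff]
  exact forall_congr' fun j => imp_iff_right (Nat.zero_le j)

@[simp]
theorem delta_self (x : Vx d n) : delta x x = 0 :=
  delta_eq_zero_iff.2 rfl

theorem delta_comm (x y : Vx d n) : delta x y = delta y x := by
  simp only [delta, ne_comm]

theorem delta_le_trans (hxy : delta x y ≤ m) (hyz : delta y z ≤ m) : delta x z ≤ m :=
  delta_le_iff.2 fun j hj => (delta_le_iff.1 hxy j hj).trans (delta_le_iff.1 hyz j hj)

theorem delta_eq_succ_iff {p : Fin d} :
    delta x y = p + 1 ↔ x p ≠ y p ∧ ∀ j, p < j → x j = y j := by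
  have hle : delta x y ≤ p + 1 ↔ ∀ j, p < j → x j = y j := delta_le_iff
  have hlt : delta x y ≤ p ↔ ∀ j, p ≤ j → x j = y j := delta_le_iff
  have hsplit : (∀ j, p ≤ j → x j = y j) ↔ x p = y p ∧ ∀ j, p < j → x j = y j := by
    simp only [le_iff_eq_or_lt, or_imp, forall_and, forall_eq']
  rw [← hle] at hsplit ⊢
  rw [hsplit] at hlt
  omega

theorem delta_update {p : Fin d} {a : Fin (n p)} (ha : a ≠ x p) :
    delta x (Function.update x p a) = p + 1 := by
  refine delta_eq_succ_iff.2 ⟨?_, fun j hj => ?_⟩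
  · rw [Function.update_self]
    exact ha.symm
  · rw [Function.update_of_ne hj.ne']

theorem delta_eq_of_delta_lt (hx : delta x₀ x = i) (hxy : delta x y < i) : delta x₀ y = i := by
  have hle : delta x₀ y ≤ i := delta_le_trans hx.le hxy.le
  have hge : ¬ delta x₀ y ≤ i - 1 := fun hy => by
    have : delta x₀ x ≤ i - 1 := delta_le_trans hy (by rw [delta_comm]; omega)
    omega
  omega

theorem sphere_zero (x : Vx d n) : ({y | delta x y = 0} : Finset (Vx d n)) = {x} := by
  ext y
  rw [mem_filter_univ, delta_eq_zero_iff, mem_singleton, eq_comm]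

theorem sphere_succ (x : Vx d n) (p : Fin d) :
    ({y | delta x y = p + 1} : Finset (Vx d n)) =
      Fintype.piFinset fun j =>
        if j < p then univ else if j = p then univ.erase (x j) else {x j} := by
  ext y
  rw [mem_filter_univ, Fintype.mem_piFinset, delta_eq_succ_iff]
  constructor
  · rintro ⟨hp, hgt⟩ j
    rcases lt_trichotomy j p with hj | rfl | hj
    · simp [hj]
    · simpa using hp.symm
    · simpa [hj.not_gt, hj.ne'] using (hgt j hj).symm
  · refine fun hy => ⟨?_, fun j hj => ?_⟩
    · simpa [eq_comm] using hy p
    · simpa [hj.not_gt, hj.ne', eq_comm] using hy j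

theorem card_sphere (x : Vx d n) (hi : i ≤ d) : #{y | delta x y = i} = k n i := by
  cases i with
  | zero => simp [sphere_zero, k]
  | succ p =>
    let f (j : ℕ) : ℕ := if j < p then n j else if j = p then n j - 1 else 1
    calc #{y | delta x y = p + 1} = ∏ j : Fin d, f j := by
          rw [sphere_succ x ⟨p, hi⟩, Fintype.card_piFinset]
          refine Finset.prod_congr rfl fun j _ => ?_
          simp only [f, Fin.lt_def, Fin.ext_iff]
          split_ifs <;> simp
      _ = ∏ j ∈ range d, f j := Fin.prod_univ_eq_prod_range f d
      _ = ∏ j ∈ range (p + 1), f j :=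
          (Finset.prod_subset (range_subset_range.2 hi) fun j _ hj => by grind).symm
      _ = k n (p + 1) := by
          rw [Finset.prod_range_succ, Finset.prod_congr rfl fun j hj => if_pos (mem_range.1 hj)]
          simp [k, f]

theorem card_ball (x : Vx d n) (hm : m ≤ d) :
    #{y | delta x y ≤ m} = ∑ j ∈ range (m + 1), k n j := by
  rw [Finset.card_eq_sum_card_fiberwise (f := delta x) (t := range (m + 1))
    fun y hy => by simpa [Nat.lt_succ_iff] using hy]
  refine Finset.sum_congr rfl fun j hj => ?_
  rw [← card_sphere x ((Nat.lt_succ_iff.1 (mem_range.1 hj)).trans hm), filter_filter]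
  congr 1
  grind

end Ultrametric

section DistanceInSphere

variable {d : ℕ} {n : ℕ → ℕ}

theorem exists_delta_eq_of_lt {p q : Fin d} (x₀ : Vx d n) (hp : 2 ≤ n p) (hq : 2 ≤ n q)
    (hqp : q < p) :
    ∃ x y : Vx d n, delta x₀ x = p + 1 ∧ delta x₀ y = p + 1 ∧ delta x y = q + 1 := by
  have := Fin.nontrivial_iff_two_le.2 hp
  have := Fin.nontrivial_iff_two_le.2 hq
  obtain ⟨a, ha⟩ := exists_ne (x₀ p)
  let x := Function.update x₀ p a
  obtain ⟨b, hb⟩ := exists_ne (x q)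
  have hx : delta x₀ x = p + 1 := delta_update ha
  have hxy : delta x (Function.update x q b) = q + 1 := delta_update hb
  exact ⟨x, _, hx, delta_eq_of_delta_lt hx (by omega), hxy⟩

theorem exists_delta_eq_self_iff {p : Fin d} (x₀ : Vx d n) :
    (∃ x y : Vx d n, delta x₀ x = p + 1 ∧ delta x₀ y = p + 1 ∧ delta x y = p + 1) ↔ 2 < n p := by
  constructor
  · rintro ⟨x, y, hx, hy, hxy⟩
    rw [← Fintype.card_fin (n p), Fintype.two_lt_card_iff]
    exact ⟨x₀ p, x p, y p, (delta_eq_succ_iff.1 hx).1, (delta_eq_succ_iff.1 hy).1,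
      (delta_eq_succ_iff.1 hxy).1⟩
  · intro hp
    have hcard : 3 ≤ ENat.card (Fin (n p)) := by simpa [Nat.succ_le_iff] using hp
    have : Nontrivial (Fin (n p)) := Fin.nontrivial_iff_two_le.2 hp.le
    obtain ⟨a, ha⟩ := exists_ne (x₀ p)
    obtain ⟨b, hb, hba⟩ := ENat.exists_ne_ne_of_three_le hcard (x₀ p) a
    refine ⟨Function.update x₀ p a, Function.update x₀ p b, delta_update ha, delta_update hb, ?_⟩
    have hidem : Function.update (Function.update x₀ p a) p b = Function.update x₀ p b :=
      Function.update_idem ..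
    rw [← hidem]
    exact delta_update (by rwa [Function.update_self])

theorem exists_delta_eq_iff {i h : ℕ} (hn : ∀ j < d, 2 ≤ n j) (x₀ : Vx d n) (hh : h < i)
    (hi : i ≤ d) :
    (∃ x y : Vx d n, delta x₀ x = i ∧ delta x₀ y = i ∧ delta x y = h + 1) ↔
      ¬ (h = i - 1 ∧ n (i - 1) = 2) := by
  obtain ⟨p, rfl⟩ : ∃ p, i = p + 1 := ⟨i - 1, by omega⟩
  rcases (Nat.le_of_lt_succ hh).lt_or_eq with hlt | rfl
  · have hex := exists_delta_eq_of_lt (p := ⟨p, hi⟩) (q := ⟨h, by omega⟩) x₀ (hn p hi)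
      (hn h (by omega)) hlt
    exact iff_of_true hex (by omega)
  · have hnh := hn h hi
    refine (exists_delta_eq_self_iff (p := ⟨h, hi⟩) x₀).trans ?_
    simp only [Nat.add_sub_cancel, true_and]
    omega

end DistanceInSphere

section TerwilligerAlgebra

variable {d : ℕ} {n : ℕ → ℕ} {x₀ : Vx d n} {i h m : ℕ}

/-- The equivalence relation whose classes are the balls of radius `m`. -/
def BallRel (m : ℕ) (x y : Vx d n) : Prop :=
  delta x y ≤ m

instance : DecidableRel (BallRel m : Vx d n → Vx d n → Prop) :=
  fun x y => Nat.decLe (delta x y) m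

instance : Std.Symm (BallRel m : Vx d n → Vx d n → Prop) :=
  ⟨fun x y hxy => (delta_comm y x).trans_le hxy⟩

instance : IsTrans (Vx d n) (BallRel m) :=
  ⟨fun _ _ _ => delta_le_trans⟩

/-- The restriction of `BallRel m` to the sphere of radius `i` about `x₀`. -/
def SphereRel (x₀ : Vx d n) (i m : ℕ) (x y : Vx d n) : Prop :=
  (delta x₀ x = i ∧ delta x₀ y = i) ∧ BallRel m x y

instance : DecidableRel (SphereRel x₀ i m) :=
  fun _ _ => instDecidableAnd

instance : Std.Symm (SphereRel x₀ i m) :=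
  ⟨fun _ _ hxy => ⟨hxy.1.symm, symm_of (BallRel m) hxy.2⟩⟩

instance : IsTrans (Vx d n) (SphereRel x₀ i m) :=
  ⟨fun _ _ _ hxy hyz => ⟨⟨hxy.1.1, hyz.1.2⟩, trans_of (BallRel m) hxy.2 hyz.2⟩⟩

theorem sphereRel_self_iff {x : Vx d n} : SphereRel x₀ i m x x ↔ delta x₀ x = i := by
  simp [SphereRel, BallRel]

theorem SphereRel.mono {m' : ℕ} (hm : m ≤ m') (x y : Vx d n) (hxy : SphereRel x₀ i m x y) :
    SphereRel x₀ i m' x y :=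
  ⟨hxy.1, hxy.2.trans hm⟩

theorem sphereRel_eq_of_ballRel {l : ℕ} (hli : l < i) (hlm : l ≤ m) (x y : Vx d n)
    (hxy : BallRel l x y) : SphereRel x₀ i m x = SphereRel x₀ i m y := by
  have hyx : BallRel l y x := symm_of _ hxy
  have hsphere : delta x₀ x = i ↔ delta x₀ y = i :=
    ⟨fun hx => delta_eq_of_delta_lt hx (hxy.trans_lt hli),
      fun hy => delta_eq_of_delta_lt hy (hyx.trans_lt hli)⟩
  funext z
  simp only [SphereRel, hsphere, rel_eq_of_rel (r := BallRel m) (hxy.trans hlm)]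

theorem card_sphereRel_of_lt {x : Vx d n} (hx : delta x₀ x = i) (hm : m < i) (hi : i ≤ d) :
    #{y | SphereRel x₀ i m x y} = ∑ j ∈ range (m + 1), k n j := by
  rw [← card_ball x (hm.le.trans hi)]
  congr 1
  ext y
  simp only [SphereRel, BallRel, mem_filter, mem_univ, true_and, hx, and_iff_right_iff_imp]
  exact fun hxy => delta_eq_of_delta_lt hx (hxy.trans_lt hm)

theorem sphereRel_radius_iff {x y : Vx d n} :
    SphereRel x₀ i i x y ↔ delta x₀ x = i ∧ delta x₀ y = i :=
  and_iff_left_of_imp fun hxy => delta_le_trans ((delta_comm x x₀).trans_le hxy.1.le) hxy.2.le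

theorem isSymm_A (j : ℕ) : (A d n j).IsSymm :=
  IsSymm.ext fun x y => by simp only [A, of_apply, delta_comm y x]

theorem Es_eq_diagonal (x₀ : Vx d n) (j : ℕ) :
    Es x₀ j = diagonal fun y => if delta x₀ y = j then 1 else 0 := by
  ext y z
  simp only [Es, of_apply, diagonal_apply, ite_and]

theorem isSymm_Es (j : ℕ) : (Es x₀ j).IsSymm := by
  rw [Es_eq_diagonal]
  exact isSymm_diagonal _

theorem Es_mul_mul_Es_apply (M : Matrix (Vx d n) (Vx d n) ℂ) (x y : Vx d n) :
    (Es x₀ i * M * Es x₀ i) x y = if delta x₀ x = i ∧ delta x₀ y = i then M x y else 0 := by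
  rw [Es_eq_diagonal, mul_diagonal, diagonal_mul]
  split_ifs <;> simp_all

theorem sum_A_apply (x y : Vx d n) :
    (∑ j ∈ range (m + 1), A d n j) x y = if BallRel m x y then 1 else 0 := by
  simp [Matrix.sum_apply, A, BallRel]

theorem sum_A_eq_smul_avgMatrix (hm : m ≤ d) :
    ∑ j ∈ range (m + 1), A d n j =
      (∑ j ∈ range (m + 1), (k n j : ℂ)) • avgMatrix ℂ (BallRel m) := by
  ext x y
  have hcard : #{z | BallRel m x z} = ∑ j ∈ range (m + 1), k n j := card_ball x hm
  rw [sum_A_apply, ← Nat.cast_sum, ← hcard, Matrix.smul_apply, avgMatrix, of_apply]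
  split_ifs with hxy
  · have hpos : (#{z | BallRel m x z} : ℂ) ≠ 0 :=
      Nat.cast_ne_zero.2 (Finset.card_ne_zero_of_mem (mem_filter.2 ⟨mem_univ y, hxy⟩))
    exact (mul_inv_cancel₀ hpos).symm
  · rw [smul_zero]

theorem smul_sum_Es_mul_A_mul_Es (hm : m < i) (hi : i ≤ d) :
    (∑ j ∈ range (m + 1), (k n j : ℂ))⁻¹ •
        ∑ j ∈ range (m + 1), Es x₀ i * A d n j * Es x₀ i =
      avgMatrix ℂ (SphereRel x₀ i m) := by
  rw [avgMatrix_eq_inv_smul fun x y hxy => card_sphereRel_of_lt hxy.1.1 hm hi, Nat.cast_sum,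
    ← Finset.sum_mul, ← Finset.mul_sum]
  congr 1
  ext x y
  simp only [Es_mul_mul_Es_apply, sum_A_apply, of_apply, SphereRel, ite_and]

theorem G_self_eq_avgMatrix (hi : i ≤ d) : G x₀ i i = avgMatrix ℂ (SphereRel x₀ i i) := by
  have hcard (x y : Vx d n) (hxy : SphereRel x₀ i i x y) : #{z | SphereRel x₀ i i x z} = k n i := by
    simp only [sphereRel_radius_iff, hxy.1.1, true_and, card_sphere x₀ hi]
  rw [avgMatrix_eq_inv_smul hcard, G, if_neg (lt_irrefl i), if_neg (lt_irrefl i)]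
  congr 1
  ext x y
  simp only [Es_mul_mul_Es_apply, Jm, of_apply, sphereRel_radius_iff]

theorem F_eq_sub_avgMatrix (hh : h < i) (hi : i ≤ d) :
    F x₀ i h = avgMatrix ℂ (SphereRel x₀ i h) - avgMatrix ℂ (SphereRel x₀ i (h + 1)) := by
  unfold F
  split_ifs with hlt
  · rw [smul_sum_Es_mul_A_mul_Es hh hi, smul_sum_Es_mul_A_mul_Es (by omega) hi]
  · obtain rfl : i = h + 1 := by omega
    rw [smul_sum_Es_mul_A_mul_Es hh hi, G_self_eq_avgMatrix hi]

theorem F_eq_zero_iff_not_exists_delta_eq (hh : h < i) (hi : i ≤ d) :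
    F x₀ i h = 0 ↔
      ¬ ∃ x y : Vx d n, delta x₀ x = i ∧ delta x₀ y = i ∧ delta x y = h + 1 := by
  rw [F_eq_sub_avgMatrix hh hi, sub_eq_zero, avgMatrix_eq_iff]
  simp only [SphereRel, BallRel]
  grind

theorem F_eq_zero_iff (hn : ∀ j < d, 2 ≤ n j) (hh : h < i) (hi : i ≤ d) :
    F x₀ i h = 0 ↔ h = i - 1 ∧ n (i - 1) = 2 := by
  rw [F_eq_zero_iff_not_exists_delta_eq hh hi, exists_delta_eq_iff hn x₀ hh hi, not_not]

theorem isIdempotentElem_F (hh : h < i) (hi : i ≤ d) : IsIdempotentElem (F x₀ i h) := by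
  rw [F_eq_sub_avgMatrix hh hi]
  exact isIdempotentElem_avgMatrix_sub (SphereRel.mono h.le_succ)
    fun x hx => sphereRel_self_iff.2 (sphereRel_self_iff.1 hx)

theorem isSymm_F (hh : h < i) (hi : i ≤ d) : (F x₀ i h).IsSymm := by
  rw [F_eq_sub_avgMatrix hh hi]
  exact isSymm_avgMatrix.sub isSymm_avgMatrix

theorem avgMatrix_ballRel_mul_F_of_le (hm : m ≤ h) (hh : h < i) (hi : i ≤ d) :
    avgMatrix ℂ (BallRel m) * F x₀ i h = F x₀ i h := by
  have hfix (l : ℕ) (hml : m ≤ l) :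
      avgMatrix ℂ (BallRel m) * avgMatrix ℂ (SphereRel x₀ i l) = avgMatrix ℂ (SphereRel x₀ i l) :=
    avgMatrix_mul_avgMatrix_eq_right (sphereRel_eq_of_ballRel (hm.trans_lt hh) hml)
      fun x _ => by simp [BallRel]
  rw [F_eq_sub_avgMatrix hh hi, mul_sub, hfix h hm, hfix (h + 1) (by omega)]

theorem avgMatrix_ballRel_mul_F_of_lt (hm : h < m) (hh : h < i) (hi : i ≤ d) :
    avgMatrix ℂ (BallRel m) * F x₀ i h = 0 := by
  rw [F_eq_sub_avgMatrix hh hi]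
  exact avgMatrix_mul_sub_avgMatrix_eq_zero (fun _ _ hxy => hxy.2.trans hm.le)
    (fun _ _ hxy => hxy.2.trans hm) fun x => by simp only [sphereRel_self_iff]

theorem exists_sum_A_mul_F_eq_smul (hm : m ≤ d + 1) (hh : h < i) (hi : i ≤ d) :
    ∃ c : ℂ, (∑ j ∈ range m, A d n j) * F x₀ i h = c • F x₀ i h := by
  cases m with
  | zero => exact ⟨0, by simp⟩
  | succ m =>
    rw [sum_A_eq_smul_avgMatrix (by omega), smul_mul_assoc]
    rcases le_or_gt m h with hmh | hhm
    · exact ⟨_, by rw [avgMatrix_ballRel_mul_F_of_le hmh hh hi]⟩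
    · exact ⟨0, by rw [avgMatrix_ballRel_mul_F_of_lt hhm hh hi, smul_zero, zero_smul]⟩

theorem exists_A_mul_F_eq_smul {j : ℕ} (hj : j ≤ d) (hh : h < i) (hi : i ≤ d) :
    ∃ c : ℂ, A d n j * F x₀ i h = c • F x₀ i h := by
  obtain ⟨c, hc⟩ := exists_sum_A_mul_F_eq_smul (x₀ := x₀) (m := j + 1) (by omega) hh hi
  obtain ⟨c', hc'⟩ := exists_sum_A_mul_F_eq_smul (x₀ := x₀) (m := j) (by omega) hh hi
  refine ⟨c - c', ?_⟩
  rw [Finset.sum_range_succ, add_mul, hc'] at hc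
  rw [sub_smul, ← hc, add_sub_cancel_left]

theorem Es_mul_F (j : ℕ) (hh : h < i) (hi : i ≤ d) :
    Es x₀ j * F x₀ i h = (if i = j then 1 else 0 : ℂ) • F x₀ i h := by
  rw [F_eq_sub_avgMatrix hh hi, Es_eq_diagonal]
  ext x y
  rw [diagonal_mul, Matrix.smul_apply, smul_eq_mul]
  by_cases hx : delta x₀ x = i
  · rw [hx]
  · simp [Matrix.sub_apply, avgMatrix_apply_of_not_rel fun hxy : SphereRel x₀ i _ x y => hx hxy.1.1]

/-- The generating set of the Terwilliger algebra used in the definition of `Ter`. -/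
def terGenerators (x₀ : Vx d n) : Set (Matrix (Vx d n) (Vx d n) ℂ) :=
  (Set.range fun j : Fin (d + 1) => A d n j) ∪ Set.range fun j : Fin (d + 1) => Es x₀ j

theorem exists_mul_F_eq_smul_of_mem_terGenerators {g : Matrix (Vx d n) (Vx d n) ℂ}
    (hg : g ∈ terGenerators x₀) (hh : h < i) (hi : i ≤ d) :
    ∃ c : ℂ, g * F x₀ i h = c • F x₀ i h := by
  rcases hg with ⟨j, rfl⟩ | ⟨j, rfl⟩
  · exact exists_A_mul_F_eq_smul (Nat.lt_succ_iff.1 j.2) hh hi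
  · exact ⟨_, Es_mul_F j hh hi⟩

theorem isSymm_of_mem_terGenerators {g : Matrix (Vx d n) (Vx d n) ℂ}
    (hg : g ∈ terGenerators x₀) : g.IsSymm := by
  rcases hg with ⟨j, rfl⟩ | ⟨j, rfl⟩
  · exact isSymm_A j
  · exact isSymm_Es j

theorem exists_mul_F_eq_smul_of_mem_Ter {t : Matrix (Vx d n) (Vx d n) ℂ} (ht : t ∈ Ter x₀)
    (hh : h < i) (hi : i ≤ d) : ∃ c : ℂ, t * F x₀ i h = c • F x₀ i h :=
  exists_mul_eq_smul_of_mem_adjoin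
    (fun _ hg => exists_mul_F_eq_smul_of_mem_terGenerators hg hh hi) ht

theorem commute_F_of_mem_Ter {t : Matrix (Vx d n) (Vx d n) ℂ} (ht : t ∈ Ter x₀)
    (hh : h < i) (hi : i ≤ d) : Commute t (F x₀ i h) := by
  suffices hle : Ter x₀ ≤ Subalgebra.centralizer ℂ {F x₀ i h} from
    (Subalgebra.mem_centralizer_iff ℂ).1 (hle ht) _ rfl |>.symm
  refine Algebra.adjoin_le fun g hg => (Subalgebra.mem_centralizer_iff ℂ).2 ?_
  rintro _ rfl
  obtain ⟨c, hc⟩ := exists_mul_F_eq_smul_of_mem_terGenerators hg hh hi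
  have hcomm : Commute g (F x₀ i h) :=
    commute_of_mul_eq_smul_of_isSymm (isSymm_of_mem_terGenerators hg) (isSymm_F hh hi) hc
  exact hcomm.symm

end TerwilligerAlgebra

section Counting

theorem card_sigma_Icc_range (d : ℕ) : #((Icc 1 d).sigma fun i => range i) = d * (d + 1) / 2 := by
  calc #((Icc 1 d).sigma fun i => range i) = ∑ i ∈ Icc 1 d, i := by
        simp only [Finset.card_sigma, Finset.card_range]
    _ = ∑ i ∈ range (d + 1), i :=
        Finset.sum_subset (fun i hi => by grind) fun i _ hi => by grind
    _ = d * (d + 1) / 2 := by rw [Finset.sum_range_id, Nat.add_sub_cancel, mul_comm]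

theorem card_filter_sigma_Icc_range (d : ℕ) (P : ℕ → Prop) [DecidablePred P]
    (Q : (Σ _ : ℕ, ℕ) → Prop) [DecidablePred Q]
    (hQ : ∀ i h, h < i → i ≤ d → (Q ⟨i, h⟩ ↔ ¬ (h = i - 1 ∧ P (i - 1)))) :
    #{p ∈ (Icc 1 d).sigma fun i => range i | Q p} = d * (d + 1) / 2 - #{i ∈ range d | P i} := by
  have hcompl : #{p ∈ (Icc 1 d).sigma fun i => range i | ¬ Q p} = #{i ∈ range d | P i} := by
    refine (Finset.card_nbij' (fun i => ⟨i + 1, i⟩) Sigma.snd ?_ ?_ ?_ ?_).symm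
    · intro i hi
      grind
    · rintro ⟨i, h⟩ hp
      grind
    · intro i _
      rfl
    · rintro ⟨i, h⟩ hp
      grind
  rw [← card_sigma_Icc_range, ← hcompl]
  exact Nat.eq_sub_of_add_eq (Finset.card_filter_add_card_filter_not Q)

end Counting

open scoped Classical in
/-- `F i h = 0` iff `h = i - 1` and `n_i = 2` (paper's `n_i` is `n (i-1)`),
so the family `{F i h : 1 ≤ i ≤ d, 0 ≤ h ≤ i-1}` has exactly `d(d+1)/2 - b` nonzero
members; each nonzero `F i h` is an idempotent commuting with every element of the
Terwilliger algebra `T(x₀)` and spans a 1-dimensional two-sided ideal of `T(x₀)`. -/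
theorem stmt7 (d : ℕ) (hd : 1 ≤ d) (n : ℕ → ℕ) (hn : ∀ i < d, 2 ≤ n i)
    (x₀ : Vx d n) :
    (∀ i, 1 ≤ i → i ≤ d → ∀ h ≤ i - 1,
      (F x₀ i h = 0 ↔ h = i - 1 ∧ n (i - 1) = 2)) ∧
    ((((Finset.Icc 1 d).sigma fun i => Finset.range i).filter
        fun p => F x₀ p.1 p.2 ≠ 0).card
      = d * (d + 1) / 2 - ((Finset.range d).filter fun i => n i = 2).card) ∧
    (∀ i, 1 ≤ i → i ≤ d → ∀ h ≤ i - 1, F x₀ i h ≠ 0 →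
      F x₀ i h * F x₀ i h = F x₀ i h ∧
      (∀ t ∈ Ter x₀, t * F x₀ i h = F x₀ i h * t) ∧
      (∀ t ∈ Ter x₀, ∃ c : ℂ, t * F x₀ i h = c • F x₀ i h)) := by
  refine ⟨fun i hi₁ hi h hh => F_eq_zero_iff hn (by omega) hi, ?_, fun i hi₁ hi h hh _ => ?_⟩
  · exact card_filter_sigma_Icc_range d (fun i => n i = 2) _ fun i h hh hi =>
      not_congr (F_eq_zero_iff hn hh hi)
  · have hlt : h < i := by omega
    exact ⟨isIdempotentElem_F hlt hi, fun t ht => commute_F_of_mem_Ter ht hlt hi,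
      fun t ht => exists_mul_F_eq_smul_of_mem_Ter ht hlt hi⟩
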